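/- Define, for a nonzero real $c_0$ and integers $m \ge n \ge 0$, $\mu_0^{m,n}(c_0) = (-c_0)^n \sum_{k=0}^{m-n} \binom{n-1+k}{k}(1+c_0)^k$ (with the convention $\mu_0^{m,0}(c_0)=1$). Then: (i) for every real $t > -1$ there exists $c_0 < 0$ such that $\lim_{m\to\infty} \sum_{n=0}^{m} \mu_0^{m,n}(c_0)(-t)^n = \tfrac{1}{1+t}$; and (ii) for every real $t < -1$ there exists $c_0 > 0$ such that $\lim_{m\to\infty} \sum_{n=0}^{m} \mu_0^{m,n}(c_0)(-t)^n = \tfrac{1}{1+t}$. In other words, the introduction of the convergence-control parameter $c_0$ allows this power series to converge to $1/(1+t)$ at every point of the entire definition domain $\mathbb{R}\setminus\{-1\}$. -/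

import Mathlib

open Filter Finset

/-- HAM coefficient `μ₀^{m,n}(c₀)`, with the convention `μ₀^{m,0}(c₀) = 1`. -/
noncomputable def mu0 (c0 : ℝ) (m n : ℕ) : ℝ :=
  if n = 0 then 1
  else (-c0) ^ n * ∑ k ∈ Finset.range (m - n + 1), ((n - 1 + k).choose k : ℝ) * (1 + c0) ^ k

/-!
Expanding each term of `∑_{j < m} (x + y) ^ j` by the binomial theorem and collecting powers of `x`
produces the truncated binomial sums in the HAM coefficients, with `x = c₀ t` and `y = 1 + c₀`.
The `m`-th HAM partial sum at `t` is therefore `1 + c₀ t ∑_{j < m} (1 + c₀ (1 + t)) ^ j`. This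
geometric sum converges when `-2 < c₀ (1 + t) < 0`, and its ratio vanishes at `c₀ = -1 / (1 + t)`.
-/

theorem geom_sum_add_of_commute {R : Type*} [Semiring R] {x y : R} (h : Commute x y) (m : ℕ) :
    ∑ j ∈ range m, (x + y) ^ j =
      ∑ i ∈ range m, x ^ i * ∑ k ∈ range (m - i), ((i + k).choose k : R) * y ^ k := by
  calc ∑ j ∈ range m, (x + y) ^ j
      = ∑ j ∈ range m, ∑ i ∈ range (j + 1),
          x ^ i * (((i + (j - i)).choose (j - i) : R) * y ^ (j - i)) := by
        refine sum_congr rfl fun j _ ↦ (h.add_pow j).trans (sum_congr rfl fun i hi ↦ ?_)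
        have hij : i ≤ j := mem_range_succ_iff.mp hi
        rw [Nat.add_sub_cancel' hij, Nat.choose_symm hij, mul_assoc, Nat.cast_comm]
    _ = ∑ i ∈ range m, ∑ k ∈ range (m - i), x ^ i * (((i + k).choose k : R) * y ^ k) :=
        sum_range_diag_flip m fun i k ↦ x ^ i * (((i + k).choose k : R) * y ^ k)
    _ = ∑ i ∈ range m, x ^ i * ∑ k ∈ range (m - i), ((i + k).choose k : R) * y ^ k := by
        simp only [mul_sum]

theorem mu0_zero_right (c0 : ℝ) (m : ℕ) : mu0 c0 m 0 = 1 :=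
  if_pos rfl

theorem mu0_succ_right (c0 : ℝ) {m i : ℕ} (hi : i < m) :
    mu0 c0 m (i + 1) =
      (-c0) ^ (i + 1) * ∑ k ∈ range (m - i), ((i + k).choose k : ℝ) * (1 + c0) ^ k := by
  have hm : m - (i + 1) + 1 = m - i := by lia
  rw [mu0, if_neg i.succ_ne_zero, hm, Nat.add_sub_cancel]

theorem sum_mu0_mul_neg_pow (c0 t : ℝ) (m : ℕ) :
    ∑ n ∈ range (m + 1), mu0 c0 m n * (-t) ^ n =
      1 + c0 * t * ∑ j ∈ range m, (1 + c0 * (1 + t)) ^ j := by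
  have hterm : ∀ i ∈ range m, mu0 c0 m (i + 1) * (-t) ^ (i + 1) =
      c0 * t * ((c0 * t) ^ i *
        ∑ k ∈ range (m - i), ((i + k).choose k : ℝ) * (1 + c0) ^ k) := fun i hi ↦ by
    rw [mu0_succ_right c0 (mem_range.mp hi), mul_right_comm, ← mul_pow, neg_mul_neg, pow_succ',
      mul_assoc]
  have hratio : 1 + c0 * (1 + t) = c0 * t + (1 + c0) := by ring
  rw [sum_range_succ', mu0_zero_right, pow_zero, mul_one, add_comm, sum_congr rfl hterm, ← mul_sum,
    hratio, geom_sum_add_of_commute (Commute.all _ _)]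

theorem ham_series_converges_on_whole_domain_general {c0 t : ℝ}
    (h : c0 * (1 + t) ∈ Set.Ioo (-2) 0) :
    Tendsto (fun m : ℕ => ∑ n ∈ range (m + 1), mu0 c0 m n * (-t) ^ n)
      atTop (nhds (1 / (1 + t))) := by
  have hratio : |1 + c0 * (1 + t)| < 1 := abs_lt.mpr ⟨by linarith [h.1], by linarith [h.2]⟩
  have hlimit : 1 + c0 * t * (1 - (1 + c0 * (1 + t)))⁻¹ = 1 / (1 + t) := by
    obtain ⟨hc, ht⟩ : c0 ≠ 0 ∧ 1 + t ≠ 0 := mul_ne_zero_iff.mp h.2.ne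
    rw [sub_add_cancel_left]
    field_simp
    ring
  simp only [sum_mu0_mul_neg_pow]
  rw [← hlimit]
  exact ((hasSum_geometric_of_abs_lt_one hratio).tendsto_sum_nat.const_mul _).const_add _

theorem ham_series_converges_on_whole_domain :
    (∀ t : ℝ, -1 < t → ∃ c0 : ℝ, c0 < 0 ∧
      Tendsto (fun m : ℕ => ∑ n ∈ Finset.range (m + 1), mu0 c0 m n * (-t) ^ n)
        atTop (nhds (1 / (1 + t)))) ∧
    (∀ t : ℝ, t < -1 → ∃ c0 : ℝ, 0 < c0 ∧
      Tendsto (fun m : ℕ => ∑ n ∈ Finset.range (m + 1), mu0 c0 m n * (-t) ^ n)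
        atTop (nhds (1 / (1 + t)))) := by
  have hmem {t : ℝ} (ht : t ≠ -1) : -1 / (1 + t) * (1 + t) ∈ Set.Ioo (-2) 0 := by
    have ht' : 1 + t ≠ 0 := fun h ↦ ht (by linarith)
    rw [div_mul_cancel₀ _ ht']
    norm_num
  exact ⟨fun t ht ↦ ⟨-1 / (1 + t), div_neg_of_neg_of_pos neg_one_lt_zero (by linarith),
      ham_series_converges_on_whole_domain_general (hmem ht.ne')⟩,
    fun t ht ↦ ⟨-1 / (1 + t), div_pos_of_neg_of_neg neg_one_lt_zero (by linarith),
      ham_series_converges_on_whole_domain_general (hmem ht.ne)⟩⟩
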